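/- arXiv:1409.6082 — 2 statements merged into one kernel-verified Lean document; each statement's English description precedes it below -/
import Mathlib

section
/- Let a < b, let α ∈ (0,1), let ψ : [a,b] → ℂ be α-Hölder continuous, and define r⁺(λ) := p.v.∫_a^b ψ(t)/(t−λ) dt + iπψ(λ) for λ ∈ (a,b). Then for every η > 0 with a+η < b−η there is a constant C = C(a,b,α,η) > 0, independent of ψ, such that for all λ, λ' ∈ [a+η, b−η] one has |r⁺(λ) − r⁺(λ')| ≤ C ‖ψ‖_{C^{0,α}} |λ − λ'|^α. -/
open MeasureTheory Filter Set

/-- The sup norm of ψ over [a,b]. -/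
noncomputable def supNormIcc (a b : ℝ) (ψ : ℝ → ℂ) : ℝ :=
  ⨆ t : Set.Icc a b, ‖ψ (t : ℝ)‖

/-- The least α-Hölder constant of ψ on [a,b]. -/
noncomputable def holderSeminorm (a b α : ℝ) (ψ : ℝ → ℂ) : ℝ :=
  sInf {M : ℝ | 0 ≤ M ∧ ∀ t ∈ Set.Icc a b, ∀ t' ∈ Set.Icc a b,
    ‖ψ t - ψ t'‖ ≤ M * |t - t'| ^ α}

/-- The Hölder norm ‖ψ‖_{C^{0,α}([a,b])} = sup norm + least Hölder constant. -/
noncomputable def holderNorm (a b α : ℝ) (ψ : ℝ → ℂ) : ℝ :=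
  supNormIcc a b ψ + holderSeminorm a b α ψ


lemma int_abs {φ : ℝ → ℝ} (hφ : IntegrableOn φ (Ioi 0)) : Integrable (fun u : ℝ => φ |u|) := by
  have h1 : IntegrableOn (fun u : ℝ => φ |u|) (Ioi 0) :=
    hφ.congr_fun (fun u hu => by simp [abs_of_pos (show (0:ℝ) < u from hu)]) measurableSet_Ioi
  have h2 : IntegrableOn (fun u : ℝ => φ |u|) (Iic 0) := by
    rw [integrableOn_Iic_iff_integrableOn_Iio]
    have := (Measure.measurePreserving_neg (volume : Measure ℝ)).integrableOn_comp_preimage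
      (Homeomorph.neg ℝ).measurableEmbedding (f := fun u : ℝ => φ |u|) (s := Ioi 0)
    have h3 := this.2 h1
    simpa [Function.comp_def] using h3
  rw [← integrableOn_univ, ← Iic_union_Ioi (a := (0:ℝ))]
  exact h2.union h1

lemma int_abs_sub {φ : ℝ → ℝ} (hφ : IntegrableOn φ (Ioi 0)) (x : ℝ) :
    Integrable (fun t : ℝ => φ |t - x|) := (int_abs hφ).comp_sub_right x

lemma norm_bound {φ : ℝ → ℝ} (hφ : IntegrableOn φ (Ioi 0)) (h0 : ∀ u, 0 ≤ φ u) (x : ℝ)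
    {s : Set ℝ} (hs : MeasurableSet s) {f : ℝ → ℂ} (hf : ∀ t ∈ s, ‖f t‖ ≤ φ |t - x|) :
    ‖∫ t in s, f t‖ ≤ 2 * ∫ u in Ioi (0:ℝ), φ u := by
  have hi := int_abs_sub hφ x
  calc ‖∫ t in s, f t‖ ≤ ∫ t in s, φ |t - x| :=
        norm_integral_le_of_norm_le hi.integrableOn
          ((ae_restrict_iff' hs).2 (Eventually.of_forall hf))
    _ ≤ ∫ t, φ |t - x| := setIntegral_le_integral hi (Eventually.of_forall fun t => h0 _)
    _ = ∫ t, φ |t| := integral_sub_right_eq_self (fun t => φ |t|) x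
    _ = _ := integral_comp_abs

/-- near bound -/
lemma near_int {α r H : ℝ} (hα : 0 < α) :
    IntegrableOn ((Iic r).indicator fun u => H * |u| ^ (α - 1)) (Ioi 0) := by
  rw [integrableOn_indicator_iff measurableSet_Iic]
  rcases le_total 0 r with hr | hr
  · have : IntegrableOn (fun u : ℝ => u ^ (α - 1)) (Ioc 0 r) :=
      (intervalIntegrable_iff_integrableOn_Ioc_of_le hr).1
        (intervalIntegral.intervalIntegrable_rpow' (by linarith))
    rw [inter_comm, Ioi_inter_Iic]
    refine IntegrableOn.congr_fun (this.const_mul H) (fun u hu => ?_) measurableSet_Ioc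
    simp [abs_of_pos hu.1]
  · rw [inter_comm, Ioi_inter_Iic, Ioc_eq_empty (by linarith)]
    exact integrableOn_empty

lemma near_bound {α r H x : ℝ} (hα : 0 < α) (hr : 0 ≤ r) (hH : 0 ≤ H)
    {s : Set ℝ} (hs : MeasurableSet s) (hsr : ∀ t ∈ s, |t - x| ≤ r) {f : ℝ → ℂ}
    (hf : ∀ t ∈ s, ‖f t‖ ≤ H * |t - x| ^ (α - 1)) :
    ‖∫ t in s, f t‖ ≤ 2 * H * r ^ α / α := by
  refine (norm_bound (near_int (r := r) (H := H) hα) ?_ x hs ?_).trans (le_of_eq ?_)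
  · intro u
    exact indicator_nonneg (fun u _ => by positivity) u
  · intro t ht
    rw [indicator_of_mem (show |t - x| ∈ Iic r from hsr t ht), abs_abs]
    exact hf t ht
  · rw [setIntegral_indicator measurableSet_Iic, Ioi_inter_Iic]
    have : ∫ u in Ioc 0 r, H * |u| ^ (α - 1) = ∫ u in Ioc 0 r, H * u ^ (α - 1) :=
      setIntegral_congr_fun measurableSet_Ioc (fun u hu => by simp [abs_of_pos hu.1])
    rw [this, ← intervalIntegral.integral_of_le hr, intervalIntegral.integral_const_mul,
      integral_rpow (Or.inl (by linarith))]
    rw [sub_add_cancel, Real.zero_rpow hα.ne']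
    ring

lemma far_bound {α h H x : ℝ} (hα : α < 1) (hh : 0 < h) (hH : 0 ≤ H)
    {s : Set ℝ} (hs : MeasurableSet s) (hsr : ∀ t ∈ s, h < |t - x|) {f : ℝ → ℂ}
    (hf : ∀ t ∈ s, ‖f t‖ ≤ H * |t - x| ^ (α - 2)) :
    ‖∫ t in s, f t‖ ≤ 2 * H * h ^ (α - 1) / (1 - α) := by
  have hsub : Ioi 0 ∩ Ioi h = Ioi h := by
    rw [Ioi_inter_Ioi]; simp [hh.le]
  refine (norm_bound (φ := (Ioi h).indicator fun u => H * |u| ^ (α - 2)) ?_ ?_ x hs ?_).trans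
    (le_of_eq ?_)
  · rw [integrableOn_indicator_iff measurableSet_Ioi, inter_comm, hsub]
    refine IntegrableOn.congr_fun ((integrableOn_Ioi_rpow_of_lt (a := α - 2) (by linarith)
      hh).const_mul H) (fun u hu => ?_) measurableSet_Ioi
    simp [abs_of_pos (hh.trans hu)]
  · intro u
    exact indicator_nonneg (fun u _ => by positivity) u
  · intro t ht
    rw [indicator_of_mem (show |t - x| ∈ Ioi h from hsr t ht), abs_abs]
    exact hf t ht
  · rw [setIntegral_indicator measurableSet_Ioi, hsub]
    have : ∫ u in Ioi h, H * |u| ^ (α - 2) = ∫ u in Ioi h, H * u ^ (α - 2) :=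
      setIntegral_congr_fun measurableSet_Ioi (fun u hu => by simp [abs_of_pos (hh.trans hu)])
    rw [this, integral_const_mul, integral_Ioi_rpow_of_lt (by linarith) hh]
    rw [show α - 2 + 1 = α - 1 by ring, show 1 - α = -(α - 1) by ring]
    have : α - 1 ≠ 0 := by linarith
    field_simp

/-- the logarithm -/
noncomputable def Lg (a b x : ℝ) : ℝ := Real.log (b - x) - Real.log (x - a)

lemma log_lip {η u v : ℝ} (hη : 0 < η) (hu : η ≤ u) (hv : η ≤ v) :
    |Real.log u - Real.log v| ≤ |u - v| / η := by
  have key : ∀ u v : ℝ, η ≤ u → η ≤ v → Real.log u - Real.log v ≤ |u - v| / η := by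
    intro u v hu hv
    have hu0 : 0 < u := by linarith
    have hv0 : 0 < v := by linarith
    rw [← Real.log_div hu0.ne' hv0.ne']
    calc Real.log (u / v) ≤ u / v - 1 := Real.log_le_sub_one_of_pos (by positivity)
      _ = (u - v) / v := by field_simp
      _ ≤ |u - v| / v := by gcongr; exact le_abs_self _
      _ ≤ |u - v| / η := by gcongr
  rw [abs_le]
  have h1 := key u v hu hv
  have h2 := key v u hv hu
  rw [abs_sub_comm] at h2
  constructor <;> linarith

lemma pv_sdiff_eq {a b x δ : ℝ} (hδ : 0 < δ) (h1 : a ≤ x - δ) (h2 : x + δ ≤ b) :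
    Icc a b \ Ioo (x - δ) (x + δ) = Icc a (x - δ) ∪ Icc (x + δ) b := by
  ext t
  simp only [Set.mem_sdiff, mem_Icc, mem_Ioo, mem_union, not_and, not_lt]
  constructor
  · rintro ⟨⟨h3, h4⟩, h5⟩
    by_cases h : x - δ < t
    · right; exact ⟨h5 h, h4⟩
    · left; exact ⟨h3, by linarith⟩
  · rintro (⟨h3, h4⟩ | ⟨h3, h4⟩)
    · exact ⟨⟨h3, by linarith⟩, fun h => by linarith⟩
    · exact ⟨⟨by linarith, h4⟩, fun h => by linarith⟩

lemma kern_cont {s : Set ℝ} {x : ℝ} (hs : x ∉ s) :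
    ContinuousOn (fun t : ℝ => ((t : ℂ) - (x : ℂ))⁻¹) s := by
  refine ContinuousOn.inv₀ (by fun_prop) (fun t ht h => hs ?_)
  have : t = x := by exact_mod_cast sub_eq_zero.1 h
  exact this ▸ ht

lemma kern_int {a b x δ : ℝ} (hδ : 0 < δ) (h1 : a ≤ x - δ) (h2 : x + δ ≤ b) :
    IntegrableOn (fun t : ℝ => ((t : ℂ) - (x : ℂ))⁻¹) (Icc a b \ Ioo (x - δ) (x + δ)) := by
  rw [pv_sdiff_eq hδ h1 h2]
  refine IntegrableOn.union ?_ ?_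
  · exact (kern_cont (by simp [hδ])).integrableOn_Icc
  · exact (kern_cont (by simp [hδ])).integrableOn_Icc

lemma kern_val {a b x δ : ℝ} (hδ : 0 < δ) (h1 : a ≤ x - δ) (h2 : x + δ ≤ b) :
    ∫ t in Icc a b \ Ioo (x - δ) (x + δ), ((t : ℂ) - (x : ℂ))⁻¹ = (Lg a b x : ℂ) := by
  have hr : ∫ t in Icc a b \ Ioo (x - δ) (x + δ), ((t : ℂ) - (x : ℂ))⁻¹ =
      ((∫ t in Icc a b \ Ioo (x - δ) (x + δ), (t - x)⁻¹ : ℝ) : ℂ) := by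
    rw [← integral_complex_ofReal]; simp
  rw [hr]
  congr 1
  have hc : ∀ s : Set ℝ, x ∉ s → ContinuousOn (fun t : ℝ => (t - x)⁻¹) s := fun s hs =>
    ContinuousOn.inv₀ (by fun_prop) (fun t ht h => hs (sub_eq_zero.1 h ▸ ht))
  rw [pv_sdiff_eq hδ h1 h2, setIntegral_union ?_ measurableSet_Icc
    (hc _ (by simp [hδ])).integrableOn_Icc (hc _ (by simp [hδ])).integrableOn_Icc]
  · rw [integral_Icc_eq_integral_Ioc, integral_Icc_eq_integral_Ioc,
      ← intervalIntegral.integral_of_le h1, ← intervalIntegral.integral_of_le h2,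
      intervalIntegral.integral_comp_sub_right (fun t => t⁻¹),
      intervalIntegral.integral_comp_sub_right (fun t => t⁻¹), integral_inv, integral_inv]
    · have e1 : (x - δ - x) / (a - x) = δ / (x - a) := by
        rw [← neg_div_neg_eq]; congr 1 <;> ring
      rw [e1, show x + δ - x = δ by ring, Real.log_div hδ.ne' (by linarith),
        Real.log_div (by linarith) hδ.ne', Lg]
      ring
    · rw [uIcc_of_le (by linarith)]; simp; intro h; linarith
    · rw [uIcc_of_le (by linarith)]; simp; intro h; linarith
  · rw [Set.disjoint_left]
    intro t h3 h4
    have := h3.2; have := h4.1; linarith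

/-- the regularized integrand -/
noncomputable def gq (ψ : ℝ → ℂ) (x t : ℝ) : ℂ := (ψ t - ψ x) * ((t : ℂ) - (x : ℂ))⁻¹

lemma norm_kern (x t : ℝ) : ‖((t : ℂ) - (x : ℂ))⁻¹‖ = |t - x|⁻¹ := by
  rw [norm_inv, ← Complex.ofReal_sub, Complex.norm_real, Real.norm_eq_abs]

section
variable {a b α H : ℝ} {ψ : ℝ → ℂ}

lemma gq_bound (hH0 : 0 ≤ H)
    (hH : ∀ t ∈ Icc a b, ∀ t' ∈ Icc a b, ‖ψ t - ψ t'‖ ≤ H * |t - t'| ^ α)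
    {x t : ℝ} (hx : x ∈ Icc a b) (ht : t ∈ Icc a b) :
    ‖gq ψ x t‖ ≤ H * |t - x| ^ (α - 1) := by
  rcases eq_or_ne t x with rfl | h
  · simp only [gq, sub_self, zero_mul, norm_zero]; positivity
  · have : |t - x| ≠ 0 := by simpa [sub_eq_zero] using h
    rw [gq, norm_mul, norm_kern, Real.rpow_sub_one this, div_eq_mul_inv, ← mul_assoc]
    gcongr
    exact hH t ht x hx

lemma psi_cont (hα : 0 < α)
    (hH : ∀ t ∈ Icc a b, ∀ t' ∈ Icc a b, ‖ψ t - ψ t'‖ ≤ H * |t - t'| ^ α) :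
    ContinuousOn ψ (Icc a b) := by
  intro x hx
  rw [ContinuousWithinAt, tendsto_iff_norm_sub_tendsto_zero]
  have h1 : Tendsto (fun t : ℝ => H * |t - x| ^ α) (nhdsWithin x (Icc a b)) (nhds 0) := by
    have : Continuous (fun t : ℝ => H * |t - x| ^ α) := by
      refine continuous_const.mul (Continuous.rpow_const (by fun_prop) (fun _ => Or.inr hα.le))
    have h := this.tendsto x
    simp only [sub_self, abs_zero, Real.zero_rpow hα.ne', mul_zero] at h
    exact h.mono_left nhdsWithin_le_nhds
  refine squeeze_zero' (Eventually.of_forall fun _ => norm_nonneg _) ?_ h1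
  filter_upwards [self_mem_nhdsWithin] with t ht using hH t ht x hx

lemma gq_int (hα : 0 < α) (hH0 : 0 ≤ H)
    (hH : ∀ t ∈ Icc a b, ∀ t' ∈ Icc a b, ‖ψ t - ψ t'‖ ≤ H * |t - t'| ^ α)
    {x : ℝ} (hx : x ∈ Icc a b) : IntegrableOn (gq ψ x) (Icc a b) := by
  have hi := int_abs_sub (near_int (r := b - a) (H := H) hα) x
  refine Integrable.mono' hi.integrableOn ?_ ?_
  · refine AEStronglyMeasurable.mul ?_ ?_
    · exact (((psi_cont hα hH).sub continuousOn_const).aestronglyMeasurable measurableSet_Icc)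
    · exact (Measurable.inv (by fun_prop)).aestronglyMeasurable
  · refine (ae_restrict_iff' measurableSet_Icc).2 (Eventually.of_forall fun t ht => ?_)
    have : |t - x| ≤ b - a := by
      rw [abs_le]; constructor <;> linarith [ht.1, ht.2, hx.1, hx.2]
    rw [indicator_of_mem (show |t - x| ∈ Iic (b - a) from this), abs_abs]
    exact gq_bound hH0 hH hx ht

lemma pv_trunc (hα : 0 < α) (hH0 : 0 ≤ H)
    (hH : ∀ t ∈ Icc a b, ∀ t' ∈ Icc a b, ‖ψ t - ψ t'‖ ≤ H * |t - t'| ^ α)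
    {x δ : ℝ} (hδ : 0 < δ) (h1 : a ≤ x - δ) (h2 : x + δ ≤ b) :
    ∫ t in Icc a b \ Ioo (x - δ) (x + δ), ψ t / ((t : ℂ) - (x : ℂ)) =
      (∫ t in Icc a b, gq ψ x t) - (∫ t in Ioo (x - δ) (x + δ), gq ψ x t) + ψ x * Lg a b x := by
  have hx : x ∈ Icc a b := ⟨by linarith, by linarith⟩
  have hg := gq_int hα hH0 hH hx
  have hsub : Ioo (x - δ) (x + δ) ⊆ Icc a b := fun t ht => ⟨by linarith [ht.1], by linarith [ht.2]⟩
  rw [← setIntegral_sdiff measurableSet_Ioo hg hsub, ← kern_val hδ h1 h2, ← integral_const_mul,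
    ← integral_add (hg.mono_set sdiff_subset) ((kern_int hδ h1 h2).const_mul _)]
  congr 1
  ext t
  rw [gq]; ring

lemma pv_eq (hα : 0 < α) (hH0 : 0 ≤ H)
    (hH : ∀ t ∈ Icc a b, ∀ t' ∈ Icc a b, ‖ψ t - ψ t'‖ ≤ H * |t - t'| ^ α)
    {x : ℝ} (hx : x ∈ Ioo a b) {R : ℂ}
    (hR : Tendsto (fun δ : ℝ => ∫ t in Icc a b \ Ioo (x - δ) (x + δ), ψ t / ((t : ℂ) - (x : ℂ)))
        (nhdsWithin 0 (Ioi 0)) (nhds R)) :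
    R = (∫ t in Icc a b, gq ψ x t) + ψ x * Lg a b x := by
  refine tendsto_nhds_unique hR ?_
  rw [tendsto_iff_norm_sub_tendsto_zero]
  have h1 : Tendsto (fun δ : ℝ => 2 * H * δ ^ α / α) (nhdsWithin 0 (Ioi 0)) (nhds 0) := by
    have : Continuous (fun δ : ℝ => 2 * H * δ ^ α / α) :=
      (continuous_const.mul (Continuous.rpow_const continuous_id
        (fun _ => Or.inr hα.le))).div_const _
    have h := this.tendsto 0
    simp only [Real.zero_rpow hα.ne', mul_zero, zero_div] at h
    exact h.mono_left nhdsWithin_le_nhds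
  refine squeeze_zero' (Eventually.of_forall fun _ => norm_nonneg _) ?_ h1
  have hm : Ioo (0:ℝ) (min (x - a) (b - x)) ∈ nhdsWithin (0:ℝ) (Ioi 0) :=
    Ioo_mem_nhdsGT (lt_min (by linarith [hx.1]) (by linarith [hx.2]))
  filter_upwards [hm] with δ hδ
  have hd1 := hδ.2.trans_le (min_le_left _ _)
  have hd2 := hδ.2.trans_le (min_le_right _ _)
  rw [pv_trunc hα hH0 hH hδ.1 (by linarith) (by linarith)]
  rw [show ∀ A B C : ℂ, A - B + C - (A + C) = -B by intros; ring, norm_neg]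
  refine near_bound hα hδ.1.le hH0 measurableSet_Ioo (x := x) ?_ ?_
  · intro t ht
    rw [abs_le]; constructor <;> linarith [ht.1, ht.2]
  · intro t ht
    exact gq_bound hH0 hH ⟨hx.1.le, hx.2.le⟩ ⟨by linarith [ht.1], by linarith [ht.2]⟩

/-- the main estimate for nearby points -/
lemma near_est (hα : α ∈ Ioo (0:ℝ) 1) (hH0 : 0 ≤ H)
    (hH : ∀ t ∈ Icc a b, ∀ t' ∈ Icc a b, ‖ψ t - ψ t'‖ ≤ H * |t - t'| ^ α)
    {x y h : ℝ} (hh : 0 < h) (hxy : |x - y| = h) (hy : y ∈ Icc a b)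
    (h1 : a ≤ x - 2 * h) (h2 : x + 2 * h ≤ b) :
    ‖((∫ t in Icc a b, gq ψ x t) + ψ x * Lg a b x) - ((∫ t in Icc a b, gq ψ y t) + ψ y * Lg a b y)‖
      ≤ H * (10 / α + 4 / (1 - α)) * h ^ α + ‖ψ y‖ * |Lg a b x - Lg a b y| := by
  have hx : x ∈ Icc a b := ⟨by linarith, by linarith⟩
  have hgx := gq_int hα.1 hH0 hH hx
  have hgy := gq_int hα.1 hH0 hH hy
  have hα0 := hα.1
  have hα1 : 0 < 1 - α := by linarith [hα.2]
  set E := Ioo (x - 2 * h) (x + 2 * h) with hE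
  have hsub : E ⊆ Icc a b := fun t ht => ⟨by linarith [ht.1], by linarith [ht.2]⟩
  have ex := setIntegral_sdiff (measurableSet_Ioo : MeasurableSet E) hgx hsub
  have ey := setIntegral_sdiff (measurableSet_Ioo : MeasurableSet E) hgy hsub
  have hk := kern_val (by positivity : 0 < 2 * h) h1 h2
  have hki := kern_int (by positivity : 0 < 2 * h) h1 h2
  rw [← hE] at hk hki
  have hfar : (∫ t in Icc a b \ E, (gq ψ x t - gq ψ y t - (ψ y - ψ x) * ((t : ℂ) - (x : ℂ))⁻¹)) =
      (∫ t in Icc a b \ E, gq ψ x t) - (∫ t in Icc a b \ E, gq ψ y t)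
        - (ψ y - ψ x) * Lg a b x := by
    have i1 := hgx.mono_set (sdiff_subset : Icc a b \ E ⊆ Icc a b)
    have i2 := hgy.mono_set (sdiff_subset : Icc a b \ E ⊆ Icc a b)
    have i3 : IntegrableOn (fun t => gq ψ x t - gq ψ y t) (Icc a b \ E) := i1.sub i2
    rw [integral_sub i3 (hki.const_mul _), integral_sub i1 i2, integral_const_mul, hk]
  have habs := abs_le.1 hxy.le
  have b1 : ‖∫ t in E, gq ψ x t‖ ≤ 2 * H * (2 * h) ^ α / α :=
    near_bound hα0 (by positivity) hH0 measurableSet_Ioo (x := x)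
      (fun t ht => by rw [abs_le]; constructor <;> linarith [ht.1, ht.2])
      (fun t ht => gq_bound hH0 hH hx (hsub ht))
  have b2 : ‖∫ t in E, gq ψ y t‖ ≤ 2 * H * (3 * h) ^ α / α :=
    near_bound hα0 (by positivity) hH0 measurableSet_Ioo (x := y)
      (fun t ht => by rw [abs_le]; constructor <;> linarith [ht.1, ht.2, habs.1, habs.2])
      (fun t ht => gq_bound hH0 hH hy (hsub ht))
  have hout : ∀ t ∈ Icc a b \ E, 2 * h ≤ |t - x| := by
    intro t ht
    by_contra hc
    rw [not_le, abs_lt] at hc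
    exact ht.2 ⟨by linarith [hc.1], by linarith [hc.2]⟩
  have b3 : ‖∫ t in Icc a b \ E, (gq ψ x t - gq ψ y t - (ψ y - ψ x) * ((t : ℂ) - (x : ℂ))⁻¹)‖
      ≤ 2 * (2 * H * h) * h ^ (α - 1) / (1 - α) := by
    refine far_bound hα.2 hh (by positivity) (measurableSet_Icc.diff measurableSet_Ioo) (x := x)
      (fun t ht => by linarith [hout t ht]) (fun t ht => ?_)
    have ho := hout t ht
    have hu : 0 < |t - x| := by linarith
    have hv2 : |t - x| / 2 ≤ |t - y| := by
      have : |t - x| ≤ |t - y| + |x - y| := by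
        rw [abs_sub_comm x y]; exact abs_sub_le t y x
      linarith
    have hv : 0 < |t - y| := by linarith
    have n1 : (t : ℂ) - x ≠ 0 := by
      rw [← Complex.ofReal_sub]; exact_mod_cast abs_pos.1 hu
    have n2 : (t : ℂ) - y ≠ 0 := by
      rw [← Complex.ofReal_sub]; exact_mod_cast abs_pos.1 hv
    have e : gq ψ x t - gq ψ y t - (ψ y - ψ x) * ((t : ℂ) - (x : ℂ))⁻¹ =
        gq ψ y t * (((x - y : ℝ) : ℂ) * ((t : ℂ) - (x : ℂ))⁻¹) := by
      simp only [gq]; push_cast; field_simp; ring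
    rw [e, norm_mul, norm_mul, norm_kern, Complex.norm_real, Real.norm_eq_abs, hxy]
    have g1 := gq_bound hH0 hH hy ht.1
    have g2 : |t - y| ^ (α - 1) ≤ 2 * |t - x| ^ (α - 1) := by
      calc |t - y| ^ (α - 1) ≤ (|t - x| / 2) ^ (α - 1) :=
            Real.rpow_le_rpow_of_nonpos (by positivity) hv2 (by linarith)
        _ = 2 ^ (1 - α) * |t - x| ^ (α - 1) := by
            rw [Real.div_rpow hu.le (by norm_num), show 1 - α = -(α - 1) by ring,
              Real.rpow_neg (by norm_num)]
            field_simp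
        _ ≤ 2 ^ (1:ℝ) * |t - x| ^ (α - 1) := by
            gcongr
            · norm_num
            · linarith
        _ = _ := by rw [Real.rpow_one]
    calc ‖gq ψ y t‖ * (h * |t - x|⁻¹) ≤ (H * (2 * |t - x| ^ (α - 1))) * (h * |t - x|⁻¹) := by
          gcongr; exact g1.trans (by gcongr)
      _ = 2 * H * h * |t - x| ^ (α - 2) := by
          rw [show α - 2 = α - 1 - 1 by ring, Real.rpow_sub_one hu.ne' (α - 1)]
          field_simp
  have p : ∀ c : ℝ, 1 ≤ c → (c * h) ^ α ≤ c * h ^ α := by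
    intro c hc
    rw [Real.mul_rpow (by linarith) hh.le]
    gcongr
    calc c ^ α ≤ c ^ (1:ℝ) := Real.rpow_le_rpow_of_exponent_le hc hα.2.le
      _ = c := Real.rpow_one c
  have b1' : ‖∫ t in E, gq ψ x t‖ ≤ H * (4 / α) * h ^ α := b1.trans (by
    calc 2 * H * (2 * h) ^ α / α ≤ 2 * H * (2 * h ^ α) / α := by
          gcongr; exact p 2 (by norm_num)
      _ = _ := by ring)
  have b2' : ‖∫ t in E, gq ψ y t‖ ≤ H * (6 / α) * h ^ α := b2.trans (by
    calc 2 * H * (3 * h) ^ α / α ≤ 2 * H * (3 * h ^ α) / α := by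
          gcongr; exact p 3 (by norm_num)
      _ = _ := by ring)
  have b3' : 2 * (2 * H * h) * h ^ (α - 1) / (1 - α) = H * (4 / (1 - α)) * h ^ α := by
    rw [Real.rpow_sub_one hh.ne']; field_simp; ring
  rw [b3', hfar] at b3
  have b4 : ‖ψ y * ((Lg a b x : ℂ) - Lg a b y)‖ = ‖ψ y‖ * |Lg a b x - Lg a b y| := by
    rw [norm_mul, ← Complex.ofReal_sub, Complex.norm_real, Real.norm_eq_abs]
  have etot : ((∫ t in Icc a b, gq ψ x t) + ψ x * Lg a b x)
      - ((∫ t in Icc a b, gq ψ y t) + ψ y * Lg a b y) =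
      (∫ t in E, gq ψ x t) - (∫ t in E, gq ψ y t) + ((∫ t in Icc a b \ E, gq ψ x t)
        - (∫ t in Icc a b \ E, gq ψ y t) - (ψ y - ψ x) * Lg a b x)
        + ψ y * ((Lg a b x : ℂ) - Lg a b y) := by
    rw [ex, ey]; ring
  rw [etot]
  have t1 := norm_add_le ((∫ t in E, gq ψ x t) - (∫ t in E, gq ψ y t)
    + ((∫ t in Icc a b \ E, gq ψ x t) - (∫ t in Icc a b \ E, gq ψ y t)
      - (ψ y - ψ x) * Lg a b x)) (ψ y * ((Lg a b x : ℂ) - Lg a b y))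
  have t2 := norm_add_le ((∫ t in E, gq ψ x t) - (∫ t in E, gq ψ y t))
    ((∫ t in Icc a b \ E, gq ψ x t) - (∫ t in Icc a b \ E, gq ψ y t)
      - (ψ y - ψ x) * Lg a b x)
  have t3 := norm_sub_le (∫ t in E, gq ψ x t) (∫ t in E, gq ψ y t)
  have e5 : H * (10 / α + 4 / (1 - α)) * h ^ α =
    H * (4 / α) * h ^ α + H * (6 / α) * h ^ α + H * (4 / (1 - α)) * h ^ α := by ring
  rw [e5]
  linarith

/-- crude bound -/
lemma crude_est (hα : α ∈ Ioo (0:ℝ) 1) (hH0 : 0 ≤ H)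
    (hH : ∀ t ∈ Icc a b, ∀ t' ∈ Icc a b, ‖ψ t - ψ t'‖ ≤ H * |t - t'| ^ α)
    {x : ℝ} (hx : x ∈ Icc a b) :
    ‖(∫ t in Icc a b, gq ψ x t) + ψ x * Lg a b x‖
      ≤ 2 * H * (b - a) ^ α / α + ‖ψ x‖ * |Lg a b x| := by
  refine (norm_add_le _ _).trans (add_le_add ?_ ?_)
  · refine near_bound hα.1 (by linarith [hx.1, hx.2]) hH0 measurableSet_Icc (x := x) ?_
      (fun t ht => gq_bound hH0 hH hx ht)
    intro t ht
    rw [abs_le]; constructor <;> linarith [ht.1, ht.2, hx.1, hx.2]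
  · rw [norm_mul, Complex.norm_real, Real.norm_eq_abs]

lemma le_supNorm (hψ : ContinuousOn ψ (Icc a b)) {x : ℝ} (hx : x ∈ Icc a b) :
    ‖ψ x‖ ≤ supNormIcc a b ψ := by
  have hb : BddAbove (range fun t : Icc a b => ‖ψ (t : ℝ)‖) := by
    have := (isCompact_Icc.image_of_continuousOn hψ.norm).bddAbove
    rw [image_eq_range] at this
    exact this
  exact le_ciSup hb (⟨x, hx⟩ : Icc a b)

lemma holder_spec (hα : 0 < α)
    (hM : ∃ M : ℝ, 0 ≤ M ∧ ∀ t ∈ Icc a b, ∀ t' ∈ Icc a b, ‖ψ t - ψ t'‖ ≤ M * |t - t'| ^ α) :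
    0 ≤ holderSeminorm a b α ψ ∧ ∀ t ∈ Icc a b, ∀ t' ∈ Icc a b,
      ‖ψ t - ψ t'‖ ≤ holderSeminorm a b α ψ * |t - t'| ^ α := by
  refine ⟨Real.sInf_nonneg fun M hM => hM.1, fun t ht t' ht' => ?_⟩
  rcases eq_or_ne t t' with rfl | h
  · simp [Real.zero_rpow hα.ne']
  · have hp : 0 < |t - t'| ^ α := Real.rpow_pos_of_pos (abs_pos.2 (sub_ne_zero.2 h)) _
    rw [← div_le_iff₀ hp]
    refine le_csInf hM fun M hM => ?_
    rw [div_le_iff₀ hp]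
    exact hM.2 t ht t' ht'

end

/-- interior Hölder continuity of `r⁺(λ) = p.v.∫_a^b ψ(t)/(t-λ) dt + iπψ(λ)`,
with a constant independent of ψ. -/
theorem rplus_holder_interior (a b α η : ℝ) (hab : a < b) (hα : α ∈ Set.Ioo (0:ℝ) 1)
    (hη : 0 < η) (hηab : a + η < b - η) :
    ∃ C > 0, ∀ ψ : ℝ → ℂ,
      (∃ M : ℝ, 0 ≤ M ∧ ∀ t ∈ Set.Icc a b, ∀ t' ∈ Set.Icc a b,
        ‖ψ t - ψ t'‖ ≤ M * |t - t'| ^ α) →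
      ∀ lam ∈ Set.Icc (a + η) (b - η), ∀ lam' ∈ Set.Icc (a + η) (b - η),
      ∀ R R' : ℂ,
      Filter.Tendsto
        (fun δ : ℝ => ∫ t in Set.Icc a b \ Set.Ioo (lam - δ) (lam + δ),
          ψ t / ((t : ℂ) - (lam : ℂ)))
        (nhdsWithin 0 (Set.Ioi 0)) (nhds R) →
      Filter.Tendsto
        (fun δ : ℝ => ∫ t in Set.Icc a b \ Set.Ioo (lam' - δ) (lam' + δ),
          ψ t / ((t : ℂ) - (lam' : ℂ)))
        (nhdsWithin 0 (Set.Ioi 0)) (nhds R') →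
      ‖(R + (Real.pi : ℂ) * Complex.I * ψ lam)
          - (R' + (Real.pi : ℂ) * Complex.I * ψ lam')‖
        ≤ C * holderNorm a b α ψ * |lam - lam'| ^ α := by
  have hα0 := hα.1
  have hα1 : 0 < 1 - α := by linarith [hα.2]
  have hba : 0 < b - a := by linarith
  set C1 : ℝ := 10 / α + 4 / (1 - α) + 2 * (b - a) ^ (1 - α) / η with hC1
  set C2 : ℝ := 2 * (2 * (b - a) ^ α / α + (b - a) / η) / (η / 2) ^ α with hC2
  have hC1p : 0 < C1 := by positivity
  have hC2p : 0 < C2 := by positivity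
  refine ⟨C1 + C2 + Real.pi, by positivity, ?_⟩
  intro ψ hψ x hx y hy R R' hR hR'
  obtain ⟨hH0, hH⟩ := holder_spec hα0 hψ
  have hc := psi_cont hα0 hH
  have hxI : x ∈ Icc a b := ⟨by linarith [hx.1], by linarith [hx.2]⟩
  have hyI : y ∈ Icc a b := ⟨by linarith [hy.1], by linarith [hy.2]⟩
  have hSx := le_supNorm hc hxI
  have hSy := le_supNorm hc hyI
  rw [holderNorm]
  set H := holderSeminorm a b α ψ
  set S := supNormIcc a b ψ
  have hS0 : 0 ≤ S := (norm_nonneg _).trans hSx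
  have eR := pv_eq hα0 hH0 hH ⟨by linarith [hx.1], by linarith [hx.2]⟩ hR
  have eR' := pv_eq hα0 hH0 hH ⟨by linarith [hy.1], by linarith [hy.2]⟩ hR'
  set h := |x - y| with hh
  have hh0 : 0 ≤ h := abs_nonneg _
  have hhb : h ≤ b - a := by
    rw [hh, abs_le]; constructor <;> linarith [hxI.1, hxI.2, hyI.1, hyI.2]
  have key : ‖R - R'‖ ≤ (C1 + C2) * (S + H) * h ^ α := by
    rcases hh0.eq_or_lt with h0 | hpos
    · have hxy : x = y := sub_eq_zero.1 (abs_eq_zero.1 h0.symm)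
      have : R = R' := by rw [eR, eR', hxy]
      rw [this, sub_self, norm_zero]; positivity
    have hp : 0 < h ^ α := Real.rpow_pos_of_pos hpos _
    rcases le_or_gt (2 * h) η with hs | hl
    · have hL : |Lg a b x - Lg a b y| ≤ 2 * h / η := by
        have l1 := log_lip hη (u := b - x) (v := b - y) (by linarith [hx.2]) (by linarith [hy.2])
        have l2 := log_lip hη (u := x - a) (v := y - a) (by linarith [hx.1]) (by linarith [hy.1])
        rw [show b - x - (b - y) = -(x - y) by ring, abs_neg, ← hh] at l1
        rw [show x - a - (y - a) = x - y by ring, ← hh] at l2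
        have : Lg a b x - Lg a b y = (Real.log (b - x) - Real.log (b - y))
          - (Real.log (x - a) - Real.log (y - a)) := by simp only [Lg]; ring
        rw [this]
        refine (abs_sub _ _).trans ?_
        rw [show 2 * h / η = h / η + h / η by ring]
        exact add_le_add l1 l2
      have hhh : h ≤ (b - a) ^ (1 - α) * h ^ α := by
        calc h = h ^ (1 - α) * h ^ α := by
              rw [← Real.rpow_add hpos, sub_add_cancel, Real.rpow_one]
          _ ≤ _ := by gcongr
      have e := near_est hα hH0 hH hpos hh.symm hyI (by linarith [hx.1]) (by linarith [hx.2])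
      rw [← eR, ← eR'] at e
      calc ‖R - R'‖ ≤ H * (10 / α + 4 / (1 - α)) * h ^ α + ‖ψ y‖ * |Lg a b x - Lg a b y| := e
        _ ≤ (S + H) * (10 / α + 4 / (1 - α)) * h ^ α
            + (S + H) * (2 * ((b - a) ^ (1 - α) * h ^ α) / η) := by
            refine add_le_add ?_ ?_
            · gcongr; linarith
            · refine mul_le_mul (by linarith) (hL.trans ?_) (abs_nonneg _) (by positivity)
              gcongr
        _ = C1 * (S + H) * h ^ α := by rw [hC1]; ring
        _ ≤ _ := by gcongr; linarith
    · have hLb : ∀ z ∈ Icc (a + η) (b - η), |Lg a b z| ≤ (b - a) / η := by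
        intro z hz
        refine (log_lip hη (u := b - z) (v := z - a) (by linarith [hz.2])
          (by linarith [hz.1])).trans ?_
        gcongr
        rw [abs_le]; constructor <;> linarith [hz.1, hz.2]
      have cz : ∀ z ∈ Icc (a + η) (b - η), z ∈ Icc a b → ‖ψ z‖ ≤ S →
          ‖(∫ t in Icc a b, gq ψ z t) + ψ z * Lg a b z‖
            ≤ (S + H) * (2 * (b - a) ^ α / α + (b - a) / η) := by
        intro z hz hzI hSz
        refine (crude_est hα hH0 hH hzI).trans ?_
        rw [mul_add]
        refine add_le_add ?_ ?_
        · rw [show 2 * H * (b - a) ^ α / α = H * (2 * (b - a) ^ α / α) by ring]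
          gcongr; linarith
        · exact mul_le_mul (by linarith) (hLb z hz) (abs_nonneg _) (by positivity)
      have c1 := cz x hx hxI hSx
      have c2 := cz y hy hyI hSy
      rw [← eR] at c1
      rw [← eR'] at c2
      have hq : 0 < (η / 2) ^ α := by positivity
      have hq2 : (η / 2) ^ α ≤ h ^ α := by gcongr; linarith
      calc ‖R - R'‖ ≤ 2 * ((S + H) * (2 * (b - a) ^ α / α + (b - a) / η)) := by
            linarith [norm_sub_le R R']
        _ = C2 * (S + H) * (η / 2) ^ α := by rw [hC2]; field_simp
        _ ≤ C2 * (S + H) * h ^ α := by gcongr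
        _ ≤ _ := by gcongr; linarith
  have key2 : ‖(Real.pi : ℂ) * Complex.I * (ψ x - ψ y)‖ ≤ Real.pi * (S + H) * h ^ α := by
    rw [norm_mul, norm_mul, Complex.norm_I, Complex.norm_real, Real.norm_eq_abs,
      abs_of_pos Real.pi_pos, mul_one, mul_assoc]
    gcongr
    refine (hH x hxI y hyI).trans ?_
    gcongr
    linarith
  calc _ = ‖(R - R') + (Real.pi : ℂ) * Complex.I * (ψ x - ψ y)‖ := by congr 1; ring
    _ ≤ ‖R - R'‖ + ‖(Real.pi : ℂ) * Complex.I * (ψ x - ψ y)‖ := norm_add_le _ _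
    _ ≤ (C1 + C2) * (S + H) * h ^ α + Real.pi * (S + H) * h ^ α := add_le_add key key2
    _ = _ := by ring
end

section
/- Let E ∈ ℝ and let λ : ℝ → ℝ be continuously differentiable with λ'(k) < 0 for all k, λ(k) → +∞ as k → −∞, and λ(k) → E as k → +∞ (so λ is a decreasing C¹ diffeomorphism from ℝ onto (E,∞)). Let h ∈ L¹(ℝ), let ε₀ > 0, let α ∈ (0,1), and assume that the function H : (E, E+ε₀] → ℂ defined by H(μ) := h(λ⁻¹(μ)) / |λ'(λ⁻¹(μ))| extends to an α-Hölder continuous function on [E, E+ε₀] with H(E) = 0. Then the function z ↦ r(z) := ∫_ℝ h(k)/(λ(k) − z) dk, defined and analytic on the open upper half-plane {Im z > 0}, admits a continuous extension r⁺ to the set S := {z ∈ ℂ : Im z ≥ 0, |z − E| ≤ ε₀/2}, and this extension is α-Hölder continuous on S: there exists C > 0 such that |r⁺(z) − r⁺(z')| ≤ C |z − z'|^α for all z, z' ∈ S. -/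
open MeasureTheory Filter Set

/-- Vertical estimate. -/
theorem aux_vert (f f' : ℂ → ℂ) (B C α : ℝ) (hα : α ∈ Set.Ioo (0:ℝ) 1)
    (hf : ∀ z : ℂ, 0 < z.im → HasDerivAt f (f' z) z)
    (hb : ∀ z : ℂ, 0 < z.im → z.re ≤ B → ‖f' z‖ ≤ C * z.im ^ (α - 1)) (hC : 0 ≤ C)
    (z : ℂ) (hz : 0 < z.im) (hzB : z.re ≤ B) (d : ℝ) (hd : 0 ≤ d) :
    ‖f (z + d * Complex.I) - f z‖ ≤ C / α * d ^ α := by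
  obtain ⟨h0, h1⟩ := hα
  have him : ∀ t : ℝ, (z + t * Complex.I).im = z.im + t := by intro t; simp
  have hre : ∀ t : ℝ, (z + t * Complex.I).re = z.re := by intro t; simp
  have hder : ∀ t : ℝ, 0 ≤ t → HasDerivAt (fun t : ℝ => f (z + t * Complex.I) - f z)
      (f' (z + t * Complex.I) * Complex.I) t := by
    intro t ht
    have h2 : HasDerivAt (fun t : ℂ => z + t * Complex.I) Complex.I (t : ℂ) := by
      simpa using ((hasDerivAt_id (t : ℂ)).mul_const Complex.I).const_add z
    have h3 := hf (z + t * Complex.I) (by rw [him]; linarith)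
    have h4 := (h3.comp (t : ℂ) h2).comp_ofReal
    exact h4.sub_const _
  have hder2 : ∀ t : ℝ, 0 ≤ t → HasDerivAt (fun t : ℝ => C / α * ((z.im + t) ^ α - z.im ^ α))
      (C * (z.im + t) ^ (α - 1)) t := by
    intro t ht
    have h2 : HasDerivAt (fun t : ℝ => z.im + t) 1 t := (hasDerivAt_id t).const_add _
    have h3 := ((h2.rpow_const (p := α) (Or.inl (by linarith))).sub_const (z.im ^ α)).const_mul (C / α)
    refine h3.congr_deriv ?_
    field_simp
  have key := image_norm_le_of_norm_deriv_right_le_deriv_boundary'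
    (f := fun t : ℝ => f (z + t * Complex.I) - f z) (a := 0) (b := d)
    (f' := fun t : ℝ => f' (z + t * Complex.I) * Complex.I)
    (fun t ht => (hder t ht.1).continuousAt.continuousWithinAt)
    (fun t ht => (hder t ht.1).hasDerivWithinAt)
    (B := fun t : ℝ => C / α * ((z.im + t) ^ α - z.im ^ α))
    (B' := fun t : ℝ => C * (z.im + t) ^ (α - 1))
    (by simp)
    (fun t ht => (hder2 t ht.1).continuousAt.continuousWithinAt)
    (fun t ht => (hder2 t ht.1).hasDerivWithinAt)
    (fun t ht => by
      have := hb (z + t * Complex.I) (by rw [him]; linarith [ht.1]) (by rw [hre]; exact hzB)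
      rw [him] at this
      simpa using this)
    (right_mem_Icc.2 hd)
  refine key.trans ?_
  have := Real.rpow_add_le_add_rpow hz.le hd h0.le h1.le
  gcongr
  linarith

/-- Hardy–Littlewood type lemma. -/
theorem aux_HL (f f' : ℂ → ℂ) (B C α : ℝ) (hα : α ∈ Set.Ioo (0:ℝ) 1)
    (hf : ∀ z : ℂ, 0 < z.im → HasDerivAt f (f' z) z)
    (hb : ∀ z : ℂ, 0 < z.im → z.re ≤ B → ‖f' z‖ ≤ C * z.im ^ (α - 1)) (hC : 0 ≤ C)
    (z w : ℂ) (hz : 0 < z.im) (hzB : z.re ≤ B) (hw : 0 < w.im) (hwB : w.re ≤ B) :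
    ‖f z - f w‖ ≤ (C * (2 / α + 1)) * ‖z - w‖ ^ α := by
  have h0 := hα.1
  have h1 := hα.2
  rcases eq_or_ne z w with rfl | hne
  · simp [Real.zero_rpow h0.ne']
  have hd : 0 < ‖z - w‖ := norm_pos_iff.2 (sub_ne_zero.2 hne)
  set d := ‖z - w‖ with hdd
  have e1 := aux_vert f f' B C α hα hf hb hC z hz hzB d hd.le
  have e2 := aux_vert f f' B C α hα hf hb hC w hw hwB d hd.le
  have hconv : Convex ℝ ({u : ℂ | d ≤ u.im} ∩ {u : ℂ | u.re ≤ B}) :=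
    (convex_halfSpace_im_ge d).inter (convex_halfSpace_re_le B)
  have e3 := Convex.norm_image_sub_le_of_norm_hasDerivWithin_le (f := f) (f' := f')
    (s := {u : ℂ | d ≤ u.im} ∩ {u : ℂ | u.re ≤ B}) (C := C * d ^ (α - 1))
    (x := w + d * Complex.I) (y := z + d * Complex.I)
    (fun u hu => (hf u (lt_of_lt_of_le hd hu.1)).hasDerivWithinAt)
    (fun u hu => (hb u (lt_of_lt_of_le hd hu.1) hu.2).trans (by
      have := Real.rpow_le_rpow_of_nonpos hd hu.1 (by linarith : α - 1 ≤ 0)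
      gcongr)) hconv
    ⟨by simp [hw.le], by simpa using hwB⟩ ⟨by simp [hz.le], by simpa using hzB⟩
  have e4 : z + d * Complex.I - (w + d * Complex.I) = z - w := by ring
  rw [e4, ← hdd] at e3
  have e5 : C * d ^ (α - 1) * d = C * d ^ α := by
    rw [mul_assoc, ← Real.rpow_add_one hd.ne']; simp
  rw [e5] at e3
  have e6 : f z - f w = (f (z + d * Complex.I) - f (w + d * Complex.I))
      - (f (z + d * Complex.I) - f z) + (f (w + d * Complex.I) - f w) := by ring
  rw [e6]
  refine (norm_add_le _ _).trans ?_
  have := norm_sub_le (f (z + d * Complex.I) - f (w + d * Complex.I)) (f (z + d * Complex.I) - f z)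
  have e7 : (C * (2 / α + 1)) * d ^ α = C * d ^ α + C / α * d ^ α + C / α * d ^ α := by ring
  linarith

/-- Extension to the closed half plane. -/
theorem aux_ext (f : ℂ → ℂ) (B C α : ℝ) (hα : α ∈ Set.Ioo (0:ℝ) 1) (hC : 0 ≤ C)
    (hf : ∀ z w : ℂ, 0 < z.im → z.re ≤ B → 0 < w.im → w.re ≤ B →
      ‖f z - f w‖ ≤ C * ‖z - w‖ ^ α) :
    ∃ g : ℂ → ℂ, (∀ z : ℂ, 0 < z.im → g z = f z) ∧
      ∀ z w : ℂ, 0 ≤ z.im → z.re ≤ B → 0 ≤ w.im → w.re ≤ B →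
      ‖g z - g w‖ ≤ C * ‖z - w‖ ^ α := by
  classical
  have h0 := hα.1
  let e : ℕ → ℝ := fun n => 1 / ((n : ℝ) + 1)
  have he : ∀ n, 0 < e n := fun n => Nat.one_div_pos_of_nat
  have hmono : ∀ {n m : ℕ}, n ≤ m → e m ≤ e n := fun h => Nat.one_div_le_one_div h
  have he0 : Tendsto e atTop (nhds 0) := tendsto_one_div_add_atTop_nhds_zero_nat
  have he0' : Tendsto (fun n => C * (e n) ^ α) atTop (nhds 0) := by
    have := (he0.rpow_const (p := α) (Or.inr h0.le)).const_mul C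
    simpa [Real.zero_rpow h0.ne'] using this
  have him : ∀ (z : ℂ) (t : ℝ), (z + t * Complex.I).im = z.im + t := by intro z t; simp
  have hre : ∀ (z : ℂ) (t : ℝ), (z + t * Complex.I).re = z.re := by intro z t; simp
  have hex : ∀ z : ℂ, ∃ v : ℂ, (0 < z.im → v = f z) ∧ (0 ≤ z.im → z.re ≤ B →
      Tendsto (fun n => f (z + (e n : ℝ) * Complex.I)) atTop (nhds v)) := by
    intro z
    rcases lt_or_ge 0 z.im with hz | hz
    · refine ⟨f z, fun _ => rfl, fun _ hB => ?_⟩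
      rw [tendsto_iff_norm_sub_tendsto_zero]
      refine squeeze_zero (fun _ => norm_nonneg _) (fun n => ?_) he0'
      have := hf (z + (e n : ℝ) * Complex.I) z (by rw [him]; linarith [he n]) (by rwa [hre]) hz hB
      simpa [abs_of_pos (he n)] using this
    · by_cases hB : z.re ≤ B ∧ 0 ≤ z.im
      · have hc : CauchySeq (fun n => f (z + (e n : ℝ) * Complex.I)) := by
          refine cauchySeq_of_le_tendsto_0 (fun n => C * (e n) ^ α) (fun n m N hn hm => ?_) he0'
          rw [dist_eq_norm]
          refine (hf _ _ (by rw [him]; linarith [he n]) (by rw [hre]; exact hB.1)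
            (by rw [him]; linarith [he m]) (by rw [hre]; exact hB.1)).trans ?_
          have e1 : z + (e n : ℝ) * Complex.I - (z + (e m : ℝ) * Complex.I)
              = ((e n - e m : ℝ) : ℂ) * Complex.I := by push_cast; ring
          have e2 : ‖z + (e n : ℝ) * Complex.I - (z + (e m : ℝ) * Complex.I)‖ ≤ e N := by
            rw [e1, norm_mul, Complex.norm_I, mul_one, Complex.norm_real, Real.norm_eq_abs, abs_le]
            constructor <;> linarith [he n, he m, hmono hn, hmono hm]
          gcongr
        obtain ⟨v, hv⟩ := cauchySeq_tendsto_of_complete hc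
        exact ⟨v, fun h => absurd h (not_lt.2 hz), fun _ _ => hv⟩
      · exact ⟨0, fun h => absurd h (not_lt.2 hz), fun h1 h2 => absurd ⟨h2, h1⟩ hB⟩
  choose g hg1 hg2 using hex
  refine ⟨g, hg1, fun z w hz hzB hw hwB => ?_⟩
  refine le_of_tendsto ((hg2 z hz hzB).sub (hg2 w hw hwB)).norm (Eventually.of_forall fun n => ?_)
  have := hf (z + (e n : ℝ) * Complex.I) (w + (e n : ℝ) * Complex.I)
    (by rw [him]; linarith [he n]) (by rwa [hre]) (by rw [him]; linarith [he n]) (by rwa [hre])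
  simpa using this

/-- The kernel integral. -/
theorem aux_kernel (α : ℝ) (hα : α ∈ Set.Ioo (0:ℝ) 1) :
    ∃ K : ℝ, 0 ≤ K ∧ ∀ x y : ℝ, 0 < y →
      Integrable (fun μ : ℝ => |μ - x| ^ α / ((μ - x) ^ 2 + y ^ 2)) ∧
      ∫ μ : ℝ, |μ - x| ^ α / ((μ - x) ^ 2 + y ^ 2) ≤ K * y ^ (α - 1) := by
  obtain ⟨h0, h1⟩ := hα
  have hint : Integrable (fun s : ℝ => (1 + ‖s‖ ^ 2) ^ (-(2 - α) / 2)) :=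
    integrable_rpow_neg_one_add_norm_sq (by simp; linarith)
  refine ⟨∫ s : ℝ, (1 + ‖s‖ ^ 2) ^ (-(2 - α) / 2), integral_nonneg fun s => by positivity, ?_⟩
  intro x y hy
  have hle : ∀ μ : ℝ, |μ - x| ^ α / ((μ - x) ^ 2 + y ^ 2) ≤
      y ^ (α - 2) * (1 + ‖(μ - x) / y‖ ^ 2) ^ (-(2 - α) / 2) := by
    intro μ
    set t := μ - x
    have hp : 0 < t ^ 2 + y ^ 2 := by positivity
    have e1 : |t| ^ α ≤ (t ^ 2 + y ^ 2) ^ (α / 2) := by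
      have : |t| ^ α = (t ^ 2) ^ (α / 2) := by
        rw [← sq_abs, ← Real.rpow_natCast, ← Real.rpow_mul (abs_nonneg t)]
        congr 1; push_cast; ring
      rw [this]
      gcongr
      nlinarith [sq_nonneg y]
    have e2 : 1 + ‖t / y‖ ^ 2 = (t ^ 2 + y ^ 2) / y ^ 2 := by
      rw [Real.norm_eq_abs, sq_abs]; field_simp; ring
    have e3 : (y ^ 2 : ℝ) ^ (-(2 - α) / 2) = y ^ (α - 2) := by
      rw [← Real.rpow_natCast, ← Real.rpow_mul hy.le]
      congr 1; push_cast; ring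
    rw [e2, Real.div_rpow hp.le (by positivity), e3, mul_div_cancel₀ _ (by positivity),
      div_le_iff₀ hp, ← Real.rpow_add_one hp.ne']
    refine e1.trans (le_of_eq ?_)
    congr 1; ring
  have hi2 : Integrable (fun μ : ℝ => y ^ (α - 2) * (1 + ‖(μ - x) / y‖ ^ 2) ^ (-(2 - α) / 2)) :=
    ((hint.comp_div hy.ne').comp_sub_right x).const_mul _
  have hi1 : Integrable (fun μ : ℝ => |μ - x| ^ α / ((μ - x) ^ 2 + y ^ 2)) := by
    refine hi2.mono' (Measurable.aestronglyMeasurable (by fun_prop)) (Eventually.of_forall fun μ => ?_)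
    rw [Real.norm_of_nonneg (by positivity)]
    exact hle μ
  refine ⟨hi1, (integral_mono hi1 hi2 hle).trans (le_of_eq ?_)⟩
  rw [integral_const_mul,
    integral_sub_right_eq_self (fun μ : ℝ => (1 + ‖μ / y‖ ^ 2) ^ (-(2 - α) / 2)) x,
    Measure.integral_comp_div (fun s : ℝ => (1 + ‖s‖ ^ 2) ^ (-(2 - α) / 2)) y, abs_of_pos hy,
    smul_eq_mul]
  have : y ^ (α - 1) = y ^ (α - 2) * y := by
    rw [← Real.rpow_add_one hy.ne']; congr 1; ring
  rw [this]; ring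

/-- Near part. -/
theorem aux_near (E ε₀ α M : ℝ) (hε₀ : 0 < ε₀) (hα : α ∈ Set.Ioo (0:ℝ) 1)
    (φ : ℝ → ℂ) (hφE : φ E = 0)
    (hφ : ∀ μ ∈ Set.Icc E (E + ε₀), ∀ μ' ∈ Set.Icc E (E + ε₀),
      ‖φ μ - φ μ'‖ ≤ M * |μ - μ'| ^ α) :
    ∃ C, 0 ≤ C ∧ ∀ z : ℂ, 0 < z.im → z.re ≤ E + ε₀ / 2 →
      ‖∫ μ in Ioo E (E + ε₀), φ μ / ((μ : ℂ) - z) ^ 2‖ ≤ C * z.im ^ (α - 1) := by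
  obtain ⟨K, hK, hker⟩ := aux_kernel α hα
  obtain ⟨h0, h1⟩ := hα
  have hM : 0 ≤ M := by
    have := (norm_nonneg _).trans (hφ E ⟨le_rfl, by linarith⟩ (E + ε₀) ⟨by linarith, le_rfl⟩)
    by_contra hneg
    have h2 : 0 < |E - (E + ε₀)| ^ α := by
      apply Real.rpow_pos_of_pos; simp [hε₀.ne']
    nlinarith
  have hcont : ContinuousOn φ (Icc E (E + ε₀)) := by
    intro μ hμ
    rw [ContinuousWithinAt, tendsto_iff_norm_sub_tendsto_zero]
    have hT : Tendsto (fun u : ℝ => M * |u - μ| ^ α) (nhdsWithin μ (Icc E (E + ε₀))) (nhds 0) := by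
      have hc : Continuous (fun u : ℝ => M * |u - μ| ^ α) :=
        continuous_const.mul ((by fun_prop : Continuous fun u : ℝ => |u - μ|).rpow_const
          (fun _ => Or.inr h0.le))
      have := hc.tendsto μ
      simp only [sub_self, abs_zero, Real.zero_rpow h0.ne', mul_zero] at this
      exact this.mono_left nhdsWithin_le_nhds
    refine squeeze_zero' (Eventually.of_forall fun _ => norm_nonneg _) ?_ hT
    filter_upwards [self_mem_nhdsWithin] with u hu using hφ u hu μ hμ
  refine ⟨M * K + 2 * M, by positivity, fun z hz hzB => ?_⟩
  set x := z.re with hx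
  set y := z.im with hy
  set b := E + ε₀ with hbdef
  have hne : ∀ μ : ℝ, (μ : ℂ) - z ≠ 0 := by
    intro μ h
    have := congrArg Complex.im h
    simp at this; exact hz.ne' this
  set p := max x E with hp
  have hpE : E ≤ p := le_max_right _ _
  have hpx : x ≤ p := le_max_left _ _
  have hpB : p ≤ E + ε₀ / 2 := max_le hzB (by linarith)
  have hpI : p ∈ Icc E b := ⟨hpE, by linarith⟩
  set c := φ p with hc
  have hcn : ‖c‖ ≤ M * (p - E) ^ α := by
    have := hφ p hpI E ⟨le_rfl, by linarith⟩
    rwa [hφE, sub_zero, abs_of_nonneg (by linarith)] at this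
  have hkc : Continuous (fun μ : ℝ => 1 / ((μ : ℂ) - z) ^ 2) := by
    refine Continuous.div continuous_const (by fun_prop) (fun μ => pow_ne_zero _ (hne μ))
  have hi1 : IntegrableOn (fun μ : ℝ => (φ μ - c) * (1 / ((μ : ℂ) - z) ^ 2)) (Ioo E b) :=
    (((hcont.sub continuousOn_const).mul hkc.continuousOn).integrableOn_Icc).mono_set
      Ioo_subset_Icc_self
  have hi2 : IntegrableOn (fun μ : ℝ => c * (1 / ((μ : ℂ) - z) ^ 2)) (Ioo E b) :=
    ((continuous_const.mul hkc).continuousOn.integrableOn_Icc).mono_set Ioo_subset_Icc_self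
  have hsplit : ∫ μ in Ioo E b, φ μ / ((μ : ℂ) - z) ^ 2 =
      (∫ μ in Ioo E b, (φ μ - c) * (1 / ((μ : ℂ) - z) ^ 2)) +
      c * ∫ μ in Ioo E b, (1 / ((μ : ℂ) - z) ^ 2) := by
    rw [← integral_const_mul, ← integral_add hi1 hi2]
    congr 1; ext μ; ring
  have hnorm : ∀ μ : ℝ, ‖(μ : ℂ) - z‖ ^ 2 = (μ - x) ^ 2 + y ^ 2 := by
    intro μ
    rw [Complex.sq_norm, Complex.normSq_apply]; simp; ring
  have hny : ∀ μ : ℝ, y ≤ ‖(μ : ℂ) - z‖ := by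
    intro μ
    refine le_of_sq_le_sq ?_ (norm_nonneg _)
    rw [hnorm]; nlinarith [sq_nonneg (μ - x)]
  have hnx : ∀ μ : ℝ, |μ - x| ≤ ‖(μ : ℂ) - z‖ := by
    intro μ
    refine le_of_sq_le_sq ?_ (norm_nonneg _)
    rw [hnorm, sq_abs]; nlinarith [sq_nonneg y]
  have b1 : ‖∫ μ in Ioo E b, (φ μ - c) * (1 / ((μ : ℂ) - z) ^ 2)‖ ≤ M * K * y ^ (α - 1) := by
    obtain ⟨hk1, hk2⟩ := hker x y hz
    calc ‖∫ μ in Ioo E b, (φ μ - c) * (1 / ((μ : ℂ) - z) ^ 2)‖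
        ≤ ∫ μ in Ioo E b, M * (|μ - x| ^ α / ((μ - x) ^ 2 + y ^ 2)) := by
          refine norm_integral_le_of_norm_le (hk1.const_mul M).integrableOn ?_
          refine (ae_restrict_iff' measurableSet_Ioo).2 (Eventually.of_forall fun μ hμ => ?_)
          rw [norm_mul, norm_div, norm_one, norm_pow, hnorm, mul_one_div, ← mul_div_assoc]
          have e1 := hφ μ (Ioo_subset_Icc_self hμ) p hpI
          have e2 : |μ - p| ≤ |μ - x| := by
            rcases le_total E x with h | h
            · rw [hp, max_eq_left h]
            · rw [hp, max_eq_right h, abs_of_pos (by linarith [hμ.1]), abs_of_pos (by linarith [hμ.1])]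
              linarith
          have e3 : |μ - p| ^ α ≤ |μ - x| ^ α := Real.rpow_le_rpow (abs_nonneg _) e2 h0.le
          have e4 := mul_le_mul_of_nonneg_left e3 hM
          have : 0 < (μ - x) ^ 2 + y ^ 2 := by positivity
          gcongr
          exact e1.trans e4
      _ ≤ ∫ μ : ℝ, M * (|μ - x| ^ α / ((μ - x) ^ 2 + y ^ 2)) :=
          setIntegral_le_integral (hk1.const_mul M) (Eventually.of_forall fun μ => by
            simp only [Pi.zero_apply]; positivity)
      _ ≤ M * K * y ^ (α - 1) := by
          rw [integral_const_mul, mul_assoc]; gcongr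
  have hprim : ∫ μ in Ioo E b, (1 / ((μ : ℂ) - z) ^ 2) = -1 / ((b : ℂ) - z) - -1 / ((E : ℂ) - z) := by
    rw [← integral_Ioc_eq_integral_Ioo, ← intervalIntegral.integral_of_le (by linarith)]
    refine intervalIntegral.integral_eq_sub_of_hasDerivAt (f := fun μ : ℝ => -1 / ((μ : ℂ) - z))
      (fun μ _ => ?_) (hkc.intervalIntegrable _ _)
    have h2 : HasDerivAt (fun u : ℂ => u - z) 1 (μ : ℂ) := (hasDerivAt_id _).sub_const z
    have h3 := ((hasDerivAt_const (μ : ℂ) (-1 : ℂ)).div h2 (hne μ)).comp_ofReal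
    refine h3.congr_deriv ?_
    ring
  have gen : ∀ μ : ℝ, p - E ≤ |μ - x| → (p - E) ^ α * (1 / ‖(μ : ℂ) - z‖) ≤ y ^ (α - 1) := by
    intro μ h
    set w := ‖(μ : ℂ) - z‖ with hw
    have hwy : y ≤ w := hny μ
    have hw0 : 0 < w := lt_of_lt_of_le hz hwy
    have e1 : (p - E) ^ α ≤ w ^ α := Real.rpow_le_rpow (by linarith) (h.trans (hnx μ)) h0.le
    calc (p - E) ^ α * (1 / w) ≤ w ^ α * (1 / w) := by gcongr
      _ = w ^ (α - 1) := by rw [Real.rpow_sub_one hw0.ne']; ring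
      _ ≤ y ^ (α - 1) := Real.rpow_le_rpow_of_nonpos hz hwy (by linarith)
  have b2 : ‖c * ∫ μ in Ioo E b, (1 / ((μ : ℂ) - z) ^ 2)‖ ≤ 2 * M * y ^ (α - 1) := by
    rw [hprim, norm_mul]
    have n1 : ‖-1 / ((b : ℂ) - z) - -1 / ((E : ℂ) - z)‖ ≤ 1 / ‖(b : ℂ) - z‖ + 1 / ‖(E : ℂ) - z‖ := by
      refine (norm_sub_le _ _).trans ?_
      simp
    have g1 := gen b (by
      rw [abs_of_nonneg (by linarith)]
      linarith)
    have g2' : p = E ∨ p - E ≤ |E - x| := by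
      rcases le_total E x with h | h
      · right; rw [hp, max_eq_left h, abs_sub_comm]; exact le_abs_self _
      · left; rw [hp, max_eq_right h]
    have g2 : (p - E) ^ α * (1 / ‖(E : ℂ) - z‖) ≤ y ^ (α - 1) := by
      rcases g2' with h | h
      · rw [h, sub_self, Real.zero_rpow h0.ne', zero_mul]; positivity
      · exact gen E h
    calc ‖c‖ * ‖-1 / ((b : ℂ) - z) - -1 / ((E : ℂ) - z)‖
        ≤ (M * (p - E) ^ α) * (1 / ‖(b : ℂ) - z‖ + 1 / ‖(E : ℂ) - z‖) := by
          gcongr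
      _ = M * ((p - E) ^ α * (1 / ‖(b : ℂ) - z‖) + (p - E) ^ α * (1 / ‖(E : ℂ) - z‖)) := by ring
      _ ≤ M * (y ^ (α - 1) + y ^ (α - 1)) := by gcongr
      _ = 2 * M * y ^ (α - 1) := by ring
  rw [hsplit]
  refine (norm_add_le _ _).trans ?_
  linarith

/-- Differentiation under the integral. -/
theorem aux_deriv (lam : ℝ → ℝ) (hl : Continuous lam) (h : ℝ → ℂ) (hh : Integrable h)
    (z : ℂ) (hz : 0 < z.im) :
    Integrable (fun k => h k / ((lam k : ℂ) - z) ^ 2) ∧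
    HasDerivAt (fun z : ℂ => ∫ k : ℝ, h k / ((lam k : ℂ) - z))
      (∫ k : ℝ, h k / ((lam k : ℂ) - z) ^ 2) z := by
  have hny : ∀ (w : ℂ) (μ : ℝ), w.im ≤ ‖(μ : ℂ) - w‖ := by
    intro w μ
    have := (neg_le_abs _).trans (Complex.abs_im_le_norm ((μ : ℂ) - w))
    simpa using this
  have hball : ∀ w ∈ Metric.ball z (z.im / 2), z.im / 2 < w.im := by
    intro w hw
    rw [Metric.mem_ball, dist_eq_norm] at hw
    have := (neg_le_abs _).trans (Complex.abs_im_le_norm (w - z))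
    simp at this
    linarith
  have hmeas : ∀ (w : ℂ) (n : ℕ), AEStronglyMeasurable (fun k => h k / ((lam k : ℂ) - w) ^ n) volume := by
    intro w n
    have hm : Measurable (fun k => (((lam k : ℂ) - w) ^ n)⁻¹) := by
      have : Measurable lam := hl.measurable
      fun_prop
    simp only [div_eq_mul_inv]
    exact hh.aestronglyMeasurable.mul hm.aestronglyMeasurable
  refine hasDerivAt_integral_of_dominated_loc_of_deriv_le (s := Metric.ball z (z.im / 2))
    (F := fun z k => h k / ((lam k : ℂ) - z)) (F' := fun z k => h k / ((lam k : ℂ) - z) ^ 2)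
    (bound := fun k => ‖h k‖ / (z.im / 2) ^ 2)
    (Metric.ball_mem_nhds z (by linarith))
    (Eventually.of_forall fun w => by simpa using hmeas w 1) ?_ (hmeas z 2) ?_
    (hh.norm.div_const _) ?_
  · refine (hh.norm.div_const z.im).mono' (by simpa using hmeas z 1) (Eventually.of_forall fun k => ?_)
    rw [norm_div]
    have := hny z (lam k)
    gcongr
  · refine Eventually.of_forall fun k w hw => ?_
    rw [norm_div, norm_pow]
    have := hny w (lam k)
    have := hball w hw
    gcongr
    linarith
  · refine Eventually.of_forall fun k w hw => ?_
    have hne : (lam k : ℂ) - w ≠ 0 := by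
      rw [← norm_pos_iff]
      have := hny w (lam k)
      have := hball w hw
      linarith
    have h2 : HasDerivAt (fun u : ℂ => (lam k : ℂ) - u) (-1) w := by
      simpa using (hasDerivAt_id w).const_sub (lam k : ℂ)
    refine ((hasDerivAt_const w (h k)).div h2 hne).congr_deriv ?_
    ring

theorem lap_at_threshold (E ε₀ α : ℝ) (lam lam' : ℝ → ℝ)
    (hderiv : ∀ k, HasDerivAt lam (lam' k) k) (hcont : Continuous lam')
    (hneg : ∀ k, lam' k < 0)
    (hbot : Filter.Tendsto lam Filter.atBot Filter.atTop)
    (htop : Filter.Tendsto lam Filter.atTop (nhds E))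
    (linv : ℝ → ℝ) (hlinv : ∀ k, linv (lam k) = k)
    (hlinv' : ∀ μ ∈ Set.Ioi E, lam (linv μ) = μ)
    (h : ℝ → ℂ) (hh : MeasureTheory.Integrable h)
    (hε₀ : 0 < ε₀) (hα : α ∈ Set.Ioo (0:ℝ) 1)
    (φ : ℝ → ℂ) (hφE : φ E = 0)
    (hφeq : ∀ μ ∈ Set.Ioc E (E + ε₀), φ μ = (|lam' (linv μ)|⁻¹ : ℝ) • h (linv μ))
    (M : ℝ)
    (hφHolder : ∀ μ ∈ Set.Icc E (E + ε₀), ∀ μ' ∈ Set.Icc E (E + ε₀),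
      ‖φ μ - φ μ'‖ ≤ M * |μ - μ'| ^ α) :
    ∃ rplus : ℂ → ℂ,
      (∀ z : ℂ, 0 < z.im → rplus z = ∫ k : ℝ, h k / ((lam k : ℂ) - z)) ∧
      ContinuousOn rplus {z : ℂ | 0 ≤ z.im ∧ ‖z - (E : ℂ)‖ ≤ ε₀ / 2} ∧
      ∃ C > 0, ∀ z ∈ {z : ℂ | 0 ≤ z.im ∧ ‖z - (E : ℂ)‖ ≤ ε₀ / 2},
        ∀ z' ∈ {z : ℂ | 0 ≤ z.im ∧ ‖z - (E : ℂ)‖ ≤ ε₀ / 2},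
          ‖rplus z - rplus z'‖ ≤ C * ‖z - z'‖ ^ α := by
  have h0 := hα.1
  have h1 := hα.2
  have hl : Continuous lam := continuous_iff_continuousAt.2 fun k => (hderiv k).continuousAt
  have hanti : StrictAnti lam := strictAnti_of_deriv_neg fun k => by
    rw [(hderiv k).deriv]; exact hneg k
  have hgt : ∀ k, E < lam k := fun k =>
    lt_of_le_of_lt (hanti.antitone.le_of_tendsto htop (k + 1)) (hanti (by linarith))
  obtain ⟨C₁, hC₁, hnear⟩ := aux_near E ε₀ α M hε₀ hα φ hφE hφHolder
  set k₀ := linv (E + ε₀) with hk₀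
  have hlk₀ : lam k₀ = E + ε₀ := hlinv' _ (by simp [hε₀])
  have himg : lam '' Ioi k₀ = Ioo E (E + ε₀) := by
    ext μ
    constructor
    · rintro ⟨k, hk, rfl⟩
      exact ⟨hgt k, hlk₀ ▸ hanti hk⟩
    · rintro ⟨hμ1, hμ2⟩
      refine ⟨linv μ, ?_, hlinv' μ hμ1⟩
      rw [mem_Ioi, ← hanti.lt_iff_gt, hlinv' μ hμ1, hlk₀]
      exact hμ2
  set N := ∫ k, ‖h k‖ with hN
  have hN0 : 0 ≤ N := integral_nonneg fun _ => norm_nonneg _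
  have hbound : ∀ z : ℂ, 0 < z.im → z.re ≤ E + ε₀ / 2 →
      ‖∫ k : ℝ, h k / ((lam k : ℂ) - z) ^ 2‖ ≤
        (C₁ + N * (ε₀ / 2) ^ (-(1 + α))) * z.im ^ (α - 1) := by
    intro z hz hzB
    obtain ⟨hint, -⟩ := aux_deriv lam hl h hh z hz
    have hch : ∫ k in Ioi k₀, h k / ((lam k : ℂ) - z) ^ 2 =
        ∫ μ in Ioo E (E + ε₀), φ μ / ((μ : ℂ) - z) ^ 2 := by
      rw [← himg, integral_image_eq_integral_abs_deriv_smul measurableSet_Ioi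
        (fun k _ => (hderiv k).hasDerivWithinAt) hanti.injective.injOn]
      refine setIntegral_congr_fun measurableSet_Ioi fun k hk => ?_
      have hm : lam k ∈ Ioc E (E + ε₀) := ⟨hgt k, hlk₀ ▸ (hanti hk).le⟩
      have hne : ((|lam' k| : ℝ) : ℂ) ≠ 0 := by
        exact_mod_cast abs_ne_zero.2 (hneg k).ne
      rw [hφeq _ hm, hlinv, Complex.real_smul, Complex.real_smul, Complex.ofReal_inv]
      field_simp
    rw [← integral_add_compl measurableSet_Ioi hint (s := Ioi k₀), hch]
    refine (norm_add_le _ _).trans ?_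
    have hfar : ‖∫ k in (Ioi k₀)ᶜ, h k / ((lam k : ℂ) - z) ^ 2‖ ≤
        N * (ε₀ / 2) ^ (-(1 + α)) * z.im ^ (α - 1) := by
      have hp : 0 ≤ (ε₀ / 2) ^ (-(1 + α)) * z.im ^ (α - 1) := by positivity
      calc ‖∫ k in (Ioi k₀)ᶜ, h k / ((lam k : ℂ) - z) ^ 2‖
          ≤ ∫ k in (Ioi k₀)ᶜ, ‖h k‖ * ((ε₀ / 2) ^ (-(1 + α)) * z.im ^ (α - 1)) := by
            refine norm_integral_le_of_norm_le (hh.norm.mul_const _).integrableOn ?_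
            refine (ae_restrict_iff' measurableSet_Ioi.compl).2 (Eventually.of_forall fun k hk => ?_)
            have hk' : k ≤ k₀ := by simpa using hk
            have hlk : E + ε₀ ≤ lam k := hlk₀ ▸ hanti.antitone hk'
            have w1 : z.im ≤ ‖(lam k : ℂ) - z‖ := by
              have := (neg_le_abs _).trans (Complex.abs_im_le_norm ((lam k : ℂ) - z))
              simpa using this
            have w2 : ε₀ / 2 ≤ ‖(lam k : ℂ) - z‖ := by
              have := (le_abs_self _).trans (Complex.abs_re_le_norm ((lam k : ℂ) - z))
              simp at this
              linarith
            rw [norm_div, norm_pow, div_eq_mul_inv]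
            set w := ‖(lam k : ℂ) - z‖
            have hw : 0 < w := lt_of_lt_of_le hz w1
            have e1 : (w ^ 2)⁻¹ = w ^ (-(1 + α)) * w ^ (α - 1) := by
              rw [← Real.rpow_add hw, ← Real.rpow_natCast, ← Real.rpow_neg hw.le]
              congr 1; push_cast; ring
            rw [e1]
            have e2 := Real.rpow_le_rpow_of_nonpos (by positivity : 0 < ε₀ / 2) w2
              (by linarith : -(1 + α) ≤ 0)
            have e3 := Real.rpow_le_rpow_of_nonpos hz w1 (by linarith : α - 1 ≤ 0)
            gcongr
        _ ≤ ∫ k, ‖h k‖ * ((ε₀ / 2) ^ (-(1 + α)) * z.im ^ (α - 1)) :=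
            setIntegral_le_integral (hh.norm.mul_const _) (Eventually.of_forall fun k => by
              simp only [Pi.zero_apply]; positivity)
        _ = N * (ε₀ / 2) ^ (-(1 + α)) * z.im ^ (α - 1) := by
            rw [integral_mul_const, mul_assoc]
    have := hnear z hz hzB
    linarith
  set C₂ := C₁ + N * (ε₀ / 2) ^ (-(1 + α)) with hC₂
  have hC₂0 : 0 ≤ C₂ := by positivity
  obtain ⟨g, hg1, hg2⟩ := aux_ext (fun z : ℂ => ∫ k : ℝ, h k / ((lam k : ℂ) - z)) (E + ε₀ / 2)
    (C₂ * (2 / α + 1)) α hα (by positivity)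
    (fun z w hz hzB hw hwB => aux_HL _ _ (E + ε₀ / 2) C₂ α hα
      (fun z hz => (aux_deriv lam hl h hh z hz).2) hbound hC₂0 z w hz hzB hw hwB)
  have hre : ∀ z : ℂ, ‖z - (E : ℂ)‖ ≤ ε₀ / 2 → z.re ≤ E + ε₀ / 2 := by
    intro z hz
    have := (le_abs_self _).trans (Complex.abs_re_le_norm (z - (E : ℂ)))
    simp at this
    linarith
  have hH : ∀ z ∈ {z : ℂ | 0 ≤ z.im ∧ ‖z - (E : ℂ)‖ ≤ ε₀ / 2},
        ∀ z' ∈ {z : ℂ | 0 ≤ z.im ∧ ‖z - (E : ℂ)‖ ≤ ε₀ / 2},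
          ‖g z - g z'‖ ≤ (C₂ * (2 / α + 1) + 1) * ‖z - z'‖ ^ α := by
    intro z hz w hw
    refine (hg2 z w hz.1 (hre z hz.2) hw.1 (hre w hw.2)).trans ?_
    gcongr
    linarith
  refine ⟨g, hg1, ?_, C₂ * (2 / α + 1) + 1, by positivity, hH⟩
  intro z hz
  rw [ContinuousWithinAt, tendsto_iff_norm_sub_tendsto_zero]
  have hT : Continuous (fun u : ℂ => (C₂ * (2 / α + 1) + 1) * ‖u - z‖ ^ α) :=
    continuous_const.mul ((by fun_prop : Continuous fun u : ℂ => ‖u - z‖).rpow_const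
      (fun _ => Or.inr h0.le))
  have hT' := hT.tendsto z
  simp only [sub_self, norm_zero, Real.zero_rpow h0.ne', mul_zero] at hT'
  refine squeeze_zero' (Eventually.of_forall fun _ => norm_nonneg _) ?_
    (hT'.mono_left nhdsWithin_le_nhds)
  filter_upwards [self_mem_nhdsWithin] with u hu using hH u hu z hz
end
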